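/- For every ν₀ ∈ (0, 1/2) there exist ε₀ > 0, C₁ > 0 and C(ν₀) > 0 such that for all ε ∈ (0, ε₀) and every continuously differentiable b̄₀ : [−1,1] → ℝ, setting b₀ = θ_{1,ε} b̄₀, one has Q₀(b₀) ≥ (1/2 − ν₀ − C₁ e^{−2α/ε}) ∫_{−1}^{1} θ_{1,ε}(r)² b̄₀'(r)² dr − C(ν₀) ε^{−2} e^{−2α/ε} ∫_{−1}^{1} θ_{1,ε}(r)² b̄₀(r)² dr. -/

import Mathlib

open Filter MeasureTheory

/-- `f_A(ρ) = (ρ² − a²)(ρ² − b²)(2ρ² − a² − b²) + 2((2ρ² − a² − b²)² + 2(ρ² − a²)(ρ² − b²))ρ²`. -/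
noncomputable def fA (a b ρ : ℝ) : ℝ :=
  (ρ ^ 2 - a ^ 2) * (ρ ^ 2 - b ^ 2) * (2 * ρ ^ 2 - a ^ 2 - b ^ 2)
    + 2 * ((2 * ρ ^ 2 - a ^ 2 - b ^ 2) ^ 2
        + 2 * (ρ ^ 2 - a ^ 2) * (ρ ^ 2 - b ^ 2)) * ρ ^ 2

/-- The quadratic form `Q₀(u) = ∫_{−1}^{1} (u'(r)² + ε⁻² f_A(ρ₀(r/ε)) u(r)²) dr`, written for
a function `u` with (weak) derivative `g`. -/
noncomputable def Q0 (a b ε : ℝ) (ρ₀ u g : ℝ → ℝ) : ℝ :=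
  ∫ r in (-1:ℝ)..1, ((g r) ^ 2 + (ε ^ 2)⁻¹ * fA a b (ρ₀ (r / ε)) * (u r) ^ 2)

lemma aux_riccati (Q : ℝ → ℝ) (l α κ M : ℝ) (hα : 0 < α) (hl : α < l) (hκ : 1/2 < κ)
    (hM : ∀ t, Q t ≤ M) (hM0 : 0 ≤ M) (hQ : Tendsto Q atTop (nhds (-l))) :
    ∃ s > (0:ℝ), ∃ C > (0:ℝ), ∀ s' > (0:ℝ), ∀ᶠ T in atTop, ∃ p p' : ℝ → ℝ,
      Continuous p' ∧ (∀ t, HasDerivAt p (p' t) t) ∧ (∀ t, 0 ≤ p t) ∧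
      -Q T + s ≤ p T ∧ p (-T) ≤ s' ∧
      ∀ t, p' t + 2 * Q t * p t + (p t) ^ 2 / κ ≤ C * Real.exp (-2 * α * T) := by
  have hlpos : 0 < l := hα.trans hl
  have hκ0 : 0 < κ := by linarith
  have h1 : max (2 * α) (l / κ) < 2 * l := by
    apply max_lt
    · linarith
    · rw [div_lt_iff₀ hκ0]; nlinarith
  obtain ⟨A, hA1, hA2⟩ := exists_between h1
  have hA3 : 2 * α < A := lt_of_le_of_lt (le_max_left _ _) hA1
  have hA4 : l < A * κ := by
    have := lt_of_le_of_lt (le_max_right _ _) hA1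
    rwa [div_lt_iff₀ hκ0] at this
  have hA : 0 < A := by linarith
  set s := (A * κ - l) / 4 with hs
  have hspos : 0 < s := by rw [hs]; linarith
  set D := A * κ / (l + 2 * s) - 1 with hD
  have hDpos : 0 < D := by
    rw [hD, sub_pos, lt_div_iff₀ (by positivity)]
    linarith
  have hpT : A * κ / (1 + D) = l + 2 * s := by
    have : 1 + D = A * κ / (l + 2 * s) := by rw [hD]; ring
    rw [this]
    have : l + 2 * s ≠ 0 := by positivity
    field_simp
  have e1 : ∀ᶠ t in atTop, Q t < -(A / 2) := hQ.eventually_lt_const (by linarith)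
  obtain ⟨t0, ht0⟩ := eventually_atTop.1 e1
  have e2 : ∀ᶠ t in atTop, -(l + s) < Q t := hQ.eventually_const_lt (by linarith)
  refine ⟨s, hspos, (A + 2 * M) * (A * κ / D) * Real.exp (A * t0), by positivity, ?_⟩
  intro s' hs'
  have e3 : ∀ᶠ T in atTop, A * κ / D * Real.exp (-(2 * A * T)) < s' := by
    have : Tendsto (fun T : ℝ => A * κ / D * Real.exp (-(2 * A * T))) atTop
        (nhds (A * κ / D * 0)) := by
      apply Tendsto.const_mul
      apply Real.tendsto_exp_neg_atTop_nhds_zero.comp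
      exact Tendsto.const_mul_atTop (by positivity) tendsto_id
    rw [mul_zero] at this
    exact this.eventually_lt_const hs'
  filter_upwards [e2, e3, eventually_ge_atTop 0] with T hT2 hT3 hT0
  have hden : ∀ t, 0 < 1 + D * Real.exp (A * (T - t)) := fun t => by positivity
  have hle : ∀ t, A * κ / (1 + D * Real.exp (A * (T - t)))
      ≤ A * κ / D * Real.exp (-(A * (T - t))) := by
    intro t
    rw [Real.exp_neg, ← div_eq_mul_inv, div_div]
    apply div_le_div_of_nonneg_left (by positivity) (by positivity)
    linarith
  refine ⟨fun t => A * κ / (1 + D * Real.exp (A * (T - t))),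
    fun t => A * (A * κ / (1 + D * Real.exp (A * (T - t))))
      - (A * κ / (1 + D * Real.exp (A * (T - t)))) ^ 2 / κ, ?_, ?_, ?_, ?_, ?_, ?_⟩
  · have : Continuous (fun t => A * κ / (1 + D * Real.exp (A * (T - t)))) :=
      Continuous.div (by fun_prop) (by fun_prop) (fun t => (hden t).ne')
    fun_prop
  · intro t
    have h1 : HasDerivAt (fun t => 1 + D * Real.exp (A * (T - t)))
        (D * (Real.exp (A * (T - t)) * (A * (-1)))) t :=
      (((((hasDerivAt_id t).const_sub T).const_mul A).exp).const_mul D).const_add 1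
    have h2 := (hasDerivAt_const t (A * κ)).div h1 (hden t).ne'
    refine h2.congr_deriv ?_
    have := (hden t).ne'
    field_simp
    ring
  · intro t
    have := hden t
    positivity
  · simp only [sub_self, mul_zero, Real.exp_zero, mul_one]
    rw [hpT]; linarith
  · refine (hle (-T)).trans (le_trans (le_of_eq ?_) hT3.le)
    congr 2; ring
  · intro t
    have e : ∀ x : ℝ, A * x - x ^ 2 / κ + 2 * Q t * x + x ^ 2 / κ = (A + 2 * Q t) * x := by
      intro x; ring
    simp only []
    rw [e]
    have hp0 : 0 ≤ A * κ / (1 + D * Real.exp (A * (T - t))) := by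
      have := hden t
      positivity
    rcases le_total t0 t with h | h
    · have : A + 2 * Q t ≤ 0 := by linarith [ht0 t h]
      exact (mul_nonpos_of_nonpos_of_nonneg this hp0).trans (by positivity)
    · have h3 : Real.exp (-(A * (T - t))) ≤ Real.exp (A * t0) * Real.exp (-2 * α * T) := by
        rw [← Real.exp_add, Real.exp_le_exp]
        nlinarith
      calc (A + 2 * Q t) * (A * κ / (1 + D * Real.exp (A * (T - t))))
          ≤ (A + 2 * M) * (A * κ / (1 + D * Real.exp (A * (T - t)))) := by
            apply mul_le_mul_of_nonneg_right _ hp0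
            linarith [hM t]
        _ ≤ (A + 2 * M) * (A * κ / D * (Real.exp (A * t0) * Real.exp (-2 * α * T))) := by
            apply mul_le_mul_of_nonneg_left _ (by positivity)
            exact (hle t).trans (mul_le_mul_of_nonneg_left h3 (by positivity))
        _ = _ := by ring

lemma aux_main (q τ f p p' v : ℝ → ℝ) (κ E ε : ℝ) (hκ : 0 < κ) (hε : 0 < ε)
    (hp : ∀ t, HasDerivAt p (p' t) t) (hp' : Continuous p')
    (hτ : ∀ t, HasDerivAt τ (q t * τ t) t)
    (hq : ∀ t, HasDerivAt q (f t - q t ^ 2) t) (hf : Continuous f)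
    (hT : -q (1 / ε) ≤ p (1 / ε)) (hT' : p (-1 / ε) ≤ -q (-1 / ε))
    (hE : ∀ t, p' t + 2 * q t * p t + (p t) ^ 2 / κ ≤ E)
    (hv : ContDiff ℝ 1 v) :
    (1 - κ) * (∫ r in (-1:ℝ)..1, (τ (r / ε)) ^ 2 * (deriv v r) ^ 2)
      - (ε ^ 2)⁻¹ * E * (∫ r in (-1:ℝ)..1, (τ (r / ε)) ^ 2 * (v r) ^ 2)
    ≤ ∫ r in (-1:ℝ)..1, ((deriv (fun r => τ (r / ε) * v r) r) ^ 2
        + (ε ^ 2)⁻¹ * f (r / ε) * (τ (r / ε) * v r) ^ 2) := by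
  have hv1 : ∀ r, HasDerivAt v (deriv v r) r := fun r =>
    (hv.differentiable (by norm_num) r).hasDerivAt
  have hvc : Continuous (deriv v) := hv.continuous_deriv (by norm_num)
  have hv0 : Continuous v := hv.continuous
  have hpc : Continuous p := continuous_iff_continuousAt.2 fun t => (hp t).continuousAt
  have hqc : Continuous q := continuous_iff_continuousAt.2 fun t => (hq t).continuousAt
  have hτc : Continuous τ := continuous_iff_continuousAt.2 fun t => (hτ t).continuousAt
  have hdiv : ∀ r : ℝ, HasDerivAt (fun r : ℝ => r / ε) (1 / ε) r := fun r =>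
    (hasDerivAt_id r).div_const ε
  have hτ1 : ∀ r, HasDerivAt (fun r => τ (r / ε)) (q (r / ε) * τ (r / ε) * (1 / ε)) r :=
    fun r => (hτ (r / ε)).comp r (hdiv r)
  have hp1 : ∀ r, HasDerivAt (fun r => p (r / ε)) (p' (r / ε) * (1 / ε)) r :=
    fun r => (hp (r / ε)).comp r (hdiv r)
  have hq1 : ∀ r, HasDerivAt (fun r => q (r / ε)) ((f (r / ε) - q (r / ε) ^ 2) * (1 / ε)) r :=
    fun r => (hq (r / ε)).comp r (hdiv r)
  have hder : deriv (fun r => τ (r / ε) * v r) =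
      fun r => q (r / ε) * τ (r / ε) * (1 / ε) * v r + τ (r / ε) * deriv v r := by
    funext r
    exact ((hτ1 r).mul (hv1 r)).deriv
  rw [hder]
  set R' : ℝ → ℝ := fun r =>
    (1 / ε) * (((f (r / ε) - q (r / ε) ^ 2) * (1 / ε) + p' (r / ε) * (1 / ε))
        * (τ (r / ε) * v r) ^ 2
      + (q (r / ε) + p (r / ε)) * (2 * (τ (r / ε) * v r) *
        (q (r / ε) * τ (r / ε) * (1 / ε) * v r + τ (r / ε) * deriv v r))) with hR'
  have hR : ∀ r, HasDerivAt (fun r => (1 / ε) * ((q (r / ε) + p (r / ε)) *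
      (τ (r / ε) * v r) ^ 2)) (R' r) r := by
    intro r
    have h := (((hq1 r).add (hp1 r)).mul (((hτ1 r).mul (hv1 r)).pow 2)).const_mul (1 / ε)
    refine h.congr_deriv ?_
    simp only [hR', Pi.add_apply, Pi.mul_apply, Pi.pow_apply]
    norm_num
  have hRc : Continuous R' := by
    rw [hR']; fun_prop
  have hint : ∫ r in (-1:ℝ)..1, R' r = _ :=
    intervalIntegral.integral_eq_sub_of_hasDerivAt (fun r _ => hR r) (hRc.intervalIntegrable _ _)
  have hpos : 0 ≤ ∫ r in (-1:ℝ)..1, R' r := by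
    rw [hint]
    have h1 : 0 ≤ (1 / ε) * ((q (1 / ε) + p (1 / ε)) * (τ (1 / ε) * v 1) ^ 2) := by
      have : 0 ≤ q (1 / ε) + p (1 / ε) := by linarith
      positivity
    have h2 : 0 ≤ (1 / ε) * (-(q (-1 / ε) + p (-1 / ε)) * (τ (-1 / ε) * v (-1)) ^ 2) := by
      have : 0 ≤ -(q (-1 / ε) + p (-1 / ε)) := by linarith
      positivity
    linarith
  have key : ∫ r in (-1:ℝ)..1, ((1 - κ) * ((τ (r / ε)) ^ 2 * (deriv v r) ^ 2)
      - (ε ^ 2)⁻¹ * E * ((τ (r / ε)) ^ 2 * (v r) ^ 2) + R' r) ≤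
      ∫ r in (-1:ℝ)..1, ((q (r / ε) * τ (r / ε) * (1 / ε) * v r + τ (r / ε) * deriv v r) ^ 2
        + (ε ^ 2)⁻¹ * f (r / ε) * (τ (r / ε) * v r) ^ 2) := by
    apply intervalIntegral.integral_mono_on (by norm_num)
    · apply Continuous.intervalIntegrable; fun_prop
    · apply Continuous.intervalIntegrable; fun_prop
    · intro r _
      have hEr := hE (r / ε)
      have h1 : 0 ≤ (E - (p' (r / ε) + 2 * q (r / ε) * p (r / ε) + (p (r / ε)) ^ 2 / κ))
          * ((1 / ε) * τ (r / ε) * v r) ^ 2 := mul_nonneg (by linarith) (sq_nonneg _)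
      have h2 : 0 ≤ κ * (τ (r / ε) * (deriv v r - p (r / ε) * v r * (1 / ε) / κ)) ^ 2 := by
        positivity
      rw [← sub_nonneg]
      refine le_of_le_of_eq (add_nonneg h1 h2) ?_
      simp only [hR']
      field_simp
      ring
  have e1 : IntervalIntegrable (fun r => (1 - κ) * ((τ (r / ε)) ^ 2 * (deriv v r) ^ 2))
      volume (-1) 1 := by apply Continuous.intervalIntegrable; fun_prop
  have e2 : IntervalIntegrable (fun r => (ε ^ 2)⁻¹ * E * ((τ (r / ε)) ^ 2 * (v r) ^ 2))
      volume (-1) 1 := by apply Continuous.intervalIntegrable; fun_prop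
  rw [intervalIntegral.integral_add (e1.sub e2) (hRc.intervalIntegrable _ _),
    intervalIntegral.integral_sub e1 e2, intervalIntegral.integral_const_mul,
    intervalIntegral.integral_const_mul] at key
  linarith

/-- For every `ν₀ ∈ (0, 1/2)` there exist `ε₀, C₁, C(ν₀) > 0` such that
for all `ε ∈ (0, ε₀)` and every `C¹` function `b̄₀`, with `b₀ = θ_{1,ε} b̄₀`
(`θ_{1,ε}(r) = ρ₀'(r/ε)`),
`Q₀(b₀) ≥ (1/2 − ν₀ − C₁ e^{−2α/ε}) ∫ θ_{1,ε}² (b̄₀')² − C(ν₀) ε⁻² e^{−2α/ε} ∫ θ_{1,ε}² b̄₀²`. -/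
theorem statement15 (a b α : ℝ) (ha : 0 < a) (hab : a < b)
    (hα : 0 < α)
    (hα' : α < min (Real.sqrt 2 * (b ^ 2 - a ^ 2) * a) (Real.sqrt 2 * (b ^ 2 - a ^ 2) * b))
    (ρ₀ : ℝ → ℝ) (hreg : ContDiff ℝ 1 ρ₀)
    (hderiv : ∀ z, deriv ρ₀ z =
      Real.sqrt 2 / 2 * ((ρ₀ z) ^ 2 - a ^ 2) * (b ^ 2 - (ρ₀ z) ^ 2))
    (hbnd : ∀ z, a < ρ₀ z ∧ ρ₀ z < b)
    (hbot : Filter.Tendsto ρ₀ Filter.atBot (nhds a))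
    (htop : Filter.Tendsto ρ₀ Filter.atTop (nhds b))
    (hnorm : b * Real.log ((ρ₀ 0 - a) / (ρ₀ 0 + a))
      - a * Real.log ((b - ρ₀ 0) / (b + ρ₀ 0)) = 0)
    (ν₀ : ℝ) (hν₀ : ν₀ ∈ Set.Ioo (0:ℝ) (1/2)) :
    ∃ ε₀ > (0:ℝ), ∃ C₁ > (0:ℝ), ∃ C > (0:ℝ), ∀ ε ∈ Set.Ioo (0:ℝ) ε₀,
      ∀ b₀bar : ℝ → ℝ, ContDiff ℝ 1 b₀bar →
        Q0 a b ε ρ₀ (fun r => deriv ρ₀ (r / ε) * b₀bar r)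
            (deriv (fun r => deriv ρ₀ (r / ε) * b₀bar r)) ≥
          (1/2 - ν₀ - C₁ * Real.exp (-2 * α / ε))
              * (∫ r in (-1:ℝ)..1, (deriv ρ₀ (r / ε)) ^ 2 * (deriv b₀bar r) ^ 2)
            - C * (ε ^ 2)⁻¹ * Real.exp (-2 * α / ε)
              * (∫ r in (-1:ℝ)..1, (deriv ρ₀ (r / ε)) ^ 2 * (b₀bar r) ^ 2) := by
  obtain ⟨hν1, hν2⟩ := hν₀
  have hb : 0 < b := ha.trans hab
  have hab2 : 0 < b ^ 2 - a ^ 2 := by nlinarith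
  have hs2 : Real.sqrt 2 ^ 2 = 2 := Real.sq_sqrt (by norm_num)
  have hs0 : 0 < Real.sqrt 2 := by positivity
  obtain ⟨hαa, hαb⟩ := lt_min_iff.1 hα'
  have hρ : ∀ z, HasDerivAt ρ₀ (deriv ρ₀ z) z := fun z =>
    (hreg.differentiable (by norm_num) z).hasDerivAt
  have hρc : Continuous ρ₀ := hreg.continuous
  set q : ℝ → ℝ := fun z => -(Real.sqrt 2 * ρ₀ z * (2 * ρ₀ z ^ 2 - a ^ 2 - b ^ 2)) with hqdef
  have hτ : ∀ t, HasDerivAt (deriv ρ₀) (q t * deriv ρ₀ t) t := by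
    intro t
    have h : HasDerivAt (fun z => Real.sqrt 2 / 2 * ((ρ₀ z) ^ 2 - a ^ 2) * (b ^ 2 - (ρ₀ z) ^ 2))
        _ t := ((((hρ t).pow 2).sub_const (a ^ 2)).const_mul (Real.sqrt 2 / 2)).mul
          (((hρ t).pow 2).const_sub (b ^ 2))
    rw [← funext hderiv] at h
    refine h.congr_deriv ?_
    simp only [hqdef, Pi.pow_apply]
    push_cast
    ring
  have hq : ∀ t, HasDerivAt q (fA a b (ρ₀ t) - q t ^ 2) t := by
    intro t
    have h : HasDerivAt (fun z => -(Real.sqrt 2 * ρ₀ z * (2 * ρ₀ z ^ 2 - a ^ 2 - b ^ 2)))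
        _ t := (((hρ t).const_mul (Real.sqrt 2)).mul
          (((((hρ t).pow 2).const_mul 2).sub_const (a ^ 2)).sub_const (b ^ 2))).neg
    refine h.congr_deriv ?_
    simp only [hqdef, Pi.pow_apply]
    rw [hderiv, fA]
    push_cast
    ring_nf
    simp only [hs2]
    ring
  have hfc : Continuous (fun t => fA a b (ρ₀ t)) := by
    unfold fA; fun_prop
  set M := Real.sqrt 2 * b * (b ^ 2 - a ^ 2) with hMdef
  have hM0 : 0 ≤ M := by positivity
  have hqb : ∀ t, |q t| ≤ M := by
    intro t
    obtain ⟨h1, h2⟩ := hbnd t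
    simp only [hqdef, hMdef]
    rw [abs_neg, abs_mul, abs_mul, abs_of_pos hs0, abs_of_pos (ha.trans h1)]
    have : |2 * ρ₀ t ^ 2 - a ^ 2 - b ^ 2| ≤ b ^ 2 - a ^ 2 := by
      rw [abs_le]; constructor <;> nlinarith
    have h3 : 0 < ρ₀ t := ha.trans h1
    gcongr
  have hqtop : Tendsto q atTop (nhds (-(Real.sqrt 2 * (b ^ 2 - a ^ 2) * b))) := by
    have hc : Continuous (fun x : ℝ => -(Real.sqrt 2 * x * (2 * x ^ 2 - a ^ 2 - b ^ 2))) := by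
      fun_prop
    have := (hc.tendsto b).comp htop
    refine Eq.mp (congrArg (fun x => Tendsto _ atTop (nhds x)) ?_) this
    ring
  have hqbot : Tendsto (fun t => -q (-t)) atTop
      (nhds (-(Real.sqrt 2 * (b ^ 2 - a ^ 2) * a))) := by
    have hc : Continuous (fun x : ℝ => -(-(Real.sqrt 2 * x * (2 * x ^ 2 - a ^ 2 - b ^ 2)))) := by
      fun_prop
    have := (hc.tendsto a).comp (hbot.comp tendsto_neg_atTop_atBot)
    refine Eq.mp (congrArg (fun x => Tendsto _ atTop (nhds x)) ?_) this
    ring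
  obtain ⟨s₁, hs₁, C₁, hC₁, H₁⟩ := aux_riccati q _ α (1/2 + ν₀) M hα hαb (by linarith)
    (fun t => (le_abs_self _).trans (hqb t)) hM0 hqtop
  obtain ⟨s₂, hs₂, C₂, hC₂, H₂⟩ := aux_riccati (fun t => -q (-t)) _ α (1/2 + ν₀) M hα hαa
    (by linarith) (fun t => (neg_le_abs _).trans (hqb (-t))) hM0 hqbot
  obtain ⟨T0, hT0⟩ := eventually_atTop.1 ((H₁ s₂ hs₂).and (H₂ s₁ hs₁))
  refine ⟨1 / max T0 1, by positivity, 1, one_pos, C₁ + C₂, by positivity, ?_⟩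
  rintro ε ⟨hε, hε'⟩ v hv
  have hT : T0 ≤ 1 / ε := by
    have : max T0 1 < 1 / ε := by
      rw [lt_one_div (by positivity) hε]; exact hε'
    exact (le_max_left _ _).trans this.le
  obtain ⟨⟨p₁, p₁', c₁, d₁, n₁, b₁, m₁, i₁⟩, ⟨p₂, p₂', c₂, d₂, n₂, b₂, m₂, i₂⟩⟩ := hT0 _ hT
  have hκ : (0:ℝ) < 1/2 + ν₀ := by linarith
  have hneg : -(1 / ε) = -1 / ε := by ring
  have main := aux_main q (deriv ρ₀) (fun t => fA a b (ρ₀ t)) (fun t => p₁ t - p₂ (-t))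
    (fun t => p₁' t + p₂' (-t)) v (1/2 + ν₀)
    ((C₁ + C₂) * Real.exp (-2 * α * (1 / ε))) ε hκ hε
    (fun t => by
      have h := (d₁ t).sub ((d₂ (-t)).comp t (hasDerivAt_neg t))
      refine h.congr_deriv ?_
      ring)
    (by fun_prop) hτ hq hfc
    (by show -q (1 / ε) ≤ p₁ (1 / ε) - p₂ (-(1 / ε)); linarith)
    (by
      have e : -(-1 / ε) = 1 / ε := by ring
      simp only [e]
      rw [hneg] at m₁
      simp only [hneg] at b₂
      linarith)
    (fun t => by
      have j₁ := i₁ t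
      have j₂ := i₂ (-t)
      simp only [neg_neg] at j₂
      have h3 : (p₁ t - p₂ (-t)) ^ 2 / (1/2 + ν₀)
          ≤ (p₁ t) ^ 2 / (1/2 + ν₀) + (p₂ (-t)) ^ 2 / (1/2 + ν₀) := by
        rw [← add_div]
        apply div_le_div_of_nonneg_right _ hκ.le
        nlinarith [mul_nonneg (n₁ t) (n₂ (-t))]
      linarith)
    hv
  have hnn : 0 ≤ ∫ r in (-1:ℝ)..1, (deriv ρ₀ (r / ε)) ^ 2 * (deriv v r) ^ 2 :=
    intervalIntegral.integral_nonneg (by norm_num) (fun r _ => by positivity)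
  have he : -2 * α * (1 / ε) = -2 * α / ε := by ring
  rw [he] at main
  have h4 := mul_nonneg (Real.exp_pos (-2 * α / ε)).le hnn
  unfold Q0
  refine ge_iff_le.2 (le_trans ?_ main)
  linarith
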